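/- For b₀ > 1/2 and 0 ≤ s ≤ 1/2, the estimate ‖J_-^s(u,v)‖_{L²_{x,t}} ≤ c‖u‖_{X^+_{0,b₀}}‖v‖_{X^+_{0,b}} holds provided b > 1/4 + s/2, where u, v are functions on ℝ × ℝ. -/

import Mathlib

open MeasureTheory
open scoped ENNReal

/-- Japanese bracket. -/
noncomputable def jb (x : ℝ) : ℝ := Real.sqrt (1 + x ^ 2)

/-- The `X^+_{0,b}` norm on the Fourier side: weight `⟨τ+ξ²⟩^b`. -/
noncomputable def X0norm (b : ℝ) (F : ℝ × ℝ → ℝ≥0∞) : ℝ≥0∞ :=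
  (∫⁻ p : ℝ × ℝ, ENNReal.ofReal (jb (p.2 + p.1 ^ 2) ^ (2 * b)) * F p ^ 2) ^ ((1 : ℝ) / 2)

/-- The Fourier transform of `J₋^s(u,v)`: the weighted convolution
`∫_{ξ₁+ξ₂=ξ, τ₁+τ₂=τ} ⟨ξ₁−ξ₂⟩^s F(ξ₁,τ₁) G(ξ₂,τ₂)` of the Fourier data `F, G`. -/
noncomputable def JminusConv (s : ℝ) (F G : ℝ × ℝ → ℝ≥0∞) : ℝ × ℝ → ℝ≥0∞ := fun p =>
  ∫⁻ ξ₁ : ℝ, ∫⁻ τ₁ : ℝ,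
    ENNReal.ofReal (jb (ξ₁ - (p.1 - ξ₁)) ^ s) * F (ξ₁, τ₁) * G (p.1 - ξ₁, p.2 - τ₁)

lemma jb_one_le (x : ℝ) : 1 ≤ jb x := by
  unfold jb
  rw [Real.one_le_sqrt]
  nlinarith [sq_nonneg x]

lemma jb_pos (x : ℝ) : 0 < jb x := lt_of_lt_of_le one_pos (jb_one_le x)

@[fun_prop]
lemma jb_measurable : Measurable jb := by
  unfold jb
  fun_prop

lemma jb_integrable {r : ℝ} (hr : 1 < r) :
    ∫⁻ x : ℝ, ENNReal.ofReal (jb x ^ (-r)) < ∞ := by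
  have h := integrable_rpow_neg_one_add_norm_sq (E := ℝ) (μ := volume) (r := r) (by simpa using hr)
  have h2 := h.lintegral_lt_top
  refine lt_of_eq_of_lt ?_ h2
  congr 1
  ext x
  congr 1
  unfold jb
  rw [Real.sqrt_eq_rpow, ← Real.rpow_mul (by positivity)]
  simp only [Real.norm_eq_abs, sq_abs]
  congr 1
  ring

/-- change of variables `y = 2 x ^ 2` on a set where it is injective -/
lemma cov_bound (S : Set ℝ) (hS : MeasurableSet S) (hinj : Set.InjOn (fun x : ℝ => 2 * x ^ 2) S)
    (r A : ℝ) :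
    ∫⁻ x in S, ENNReal.ofReal (|4 * x| * jb (A + 2 * x ^ 2) ^ (-r)) ≤
      ∫⁻ x : ℝ, ENNReal.ofReal (jb x ^ (-r)) := by
  have h := lintegral_image_eq_lintegral_abs_deriv_mul (f := fun x : ℝ => 2 * x ^ 2)
    (f' := fun x => 4 * x) hS
    (fun x _ => by
      have := ((hasDerivAt_pow 2 x).const_mul 2).hasDerivWithinAt (s := S)
      have e : (2 : ℝ) * (((2 : ℕ) : ℝ) * x ^ (2 - 1)) = 4 * x := by
        norm_num
        ring
      exact e ▸ this) hinj
    (fun y => ENNReal.ofReal (jb (y + A) ^ (-r)))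
  calc _ = ∫⁻ x in S, ENNReal.ofReal |4 * x| * ENNReal.ofReal (jb (2 * x ^ 2 + A) ^ (-r)) := by
        congr 1
        ext x
        rw [ENNReal.ofReal_mul (abs_nonneg _), add_comm]
    _ = _ := h.symm
    _ ≤ ∫⁻ y : ℝ, ENNReal.ofReal (jb (y + A) ^ (-r)) := setLIntegral_le_lintegral _ _
    _ = _ := lintegral_add_right_eq_self (fun y => ENNReal.ofReal (jb y ^ (-r))) A

lemma cov_bound_full (r A : ℝ) :
    ∫⁻ x : ℝ, ENNReal.ofReal (|4 * x| * jb (A + 2 * x ^ 2) ^ (-r)) ≤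
      2 * ∫⁻ x : ℝ, ENNReal.ofReal (jb x ^ (-r)) := by
  rw [← lintegral_add_compl _ (measurableSet_Ici (a := (0 : ℝ))), two_mul]
  refine add_le_add (cov_bound _ measurableSet_Ici ?_ r A)
    (cov_bound _ measurableSet_Ici.compl ?_ r A)
  · intro x hx y hy h
    simp only [Set.mem_Ici] at hx hy
    have h' : 2 * x ^ 2 = 2 * y ^ 2 := h
    exact (pow_left_inj₀ hx hy two_ne_zero).1 (by linarith)
  · intro x hx y hy h
    simp only [Set.mem_compl_iff, Set.mem_Ici, not_le] at hx hy
    have h' : 2 * x ^ 2 = 2 * y ^ 2 := h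
    have := (pow_left_inj₀ (a := -x) (b := -y) (by linarith) (by linarith) two_ne_zero).1
      (by nlinarith)
    linarith

lemma ptwise (s e q r : ℝ) (hs : s ≤ 1 / 2) (he : 0 < e) (hs0 : 0 ≤ s)
    (hq : 1 ≤ q) (hr : 1 ≤ r) :
    q ^ (2 * s) * r ^ (-(s + 1 / 2 + e)) ≤ q ^ (-(1 + 2 * e)) + q * r ^ (-(1 + e)) := by
  have hq0 : 0 < q := by linarith
  have hr0 : 0 < r := by linarith
  rcases le_total (q ^ (2 : ℝ)) r with h | h
  · have h1 : r ^ (-(s + 1 / 2 + e)) ≤ (q ^ (2 : ℝ)) ^ (-(s + 1 / 2 + e)) :=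
      Real.rpow_le_rpow_of_nonpos (by positivity) h (by linarith)
    calc _ ≤ q ^ (2 * s) * (q ^ (2 : ℝ)) ^ (-(s + 1 / 2 + e)) := by gcongr
      _ = q ^ (-(1 + 2 * e)) := by
        rw [← Real.rpow_mul hq0.le, ← Real.rpow_add hq0]
        congr 1
        ring
      _ ≤ _ := by
        have : 0 ≤ q * r ^ (-(1 + e)) := by positivity
        linarith
  · have h1 : (q ^ (2 : ℝ)) ^ (s - 1 / 2) ≤ r ^ (s - 1 / 2) :=
      Real.rpow_le_rpow_of_nonpos (by positivity) h (by linarith)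
    calc _ = q * (q ^ (2 : ℝ)) ^ (s - 1 / 2) * r ^ (-(s + 1 / 2 + e)) := by
          congr 1
          rw [← Real.rpow_mul hq0.le]
          nth_rewrite 2 [← Real.rpow_one q]
          rw [← Real.rpow_add hq0]
          congr 1
          ring
      _ ≤ q * r ^ (s - 1 / 2) * r ^ (-(s + 1 / 2 + e)) := by gcongr
      _ = q * r ^ (-(1 + e)) := by
        rw [mul_assoc, ← Real.rpow_add hr0]
        congr 2
        ring
      _ ≤ _ := by
        have : 0 ≤ q ^ (-(1 + 2 * e)) := by positivity
        linarith

lemma inner_bound (s b : ℝ) (hs0 : 0 ≤ s) (hs : s ≤ 1 / 2) (hb : 1 / 4 + s / 2 < b) :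
    ∃ C : ℝ≥0∞, C < ∞ ∧ ∀ A : ℝ,
      ∫⁻ x : ℝ, ENNReal.ofReal (jb (2 * x) ^ (2 * s) * jb (A + 2 * x ^ 2) ^ (-(2 * b))) ≤ C := by
  set e := 2 * b - s - 1 / 2 with he
  have he0 : 0 < e := by linarith
  refine ⟨(∫⁻ x : ℝ, ENNReal.ofReal (jb x ^ (-(1 + 2 * e)))) +
    ((∫⁻ x : ℝ, (Set.Icc (-1 : ℝ) 1).indicator (fun _ => 3) x) +
    2 * ∫⁻ x : ℝ, ENNReal.ofReal (jb x ^ (-(1 + e)))), ?_, ?_⟩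
  · have h1 := jb_integrable (r := 1 + 2 * e) (by linarith)
    have h2 := jb_integrable (r := 1 + e) (by linarith)
    have h3 : (∫⁻ x : ℝ, (Set.Icc (-1 : ℝ) 1).indicator (fun _ => (3 : ℝ≥0∞)) x) < ∞ := by
      rw [lintegral_indicator measurableSet_Icc]
      simp [ENNReal.mul_lt_top_iff]
    exact ENNReal.add_lt_top.2 ⟨h1, ENNReal.add_lt_top.2 ⟨h3, ENNReal.mul_lt_top (by simp) h2⟩⟩
  · intro A
    refine le_trans ?_ (add_le_add le_rfl (add_le_add le_rfl (cov_bound_full (1 + e) A)))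
    rw [← lintegral_add_left (measurable_const.indicator measurableSet_Icc),
      ← lintegral_add_left (by fun_prop)]
    · refine lintegral_mono fun x => ?_
      have hp := ptwise s e (jb (2 * x)) (jb (A + 2 * x ^ 2)) hs he0 hs0 (jb_one_le _) (jb_one_le _)
      have e1 : -(s + 1 / 2 + e) = -(2 * b) := by rw [he]; ring
      rw [e1] at hp
      have h1 : jb (2 * x) ^ (-(1 + 2 * e)) ≤ jb x ^ (-(1 + 2 * e)) := by
        refine Real.rpow_le_rpow_of_nonpos (jb_pos _) ?_ (by linarith)
        unfold jb
        exact Real.sqrt_le_sqrt (by nlinarith [sq_nonneg x])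
      have hR0 : 0 ≤ jb (A + 2 * x ^ 2) ^ (-(1 + e)) := (Real.rpow_pos_of_pos (jb_pos _) _).le
      have hR1 : jb (A + 2 * x ^ 2) ^ (-(1 + e)) ≤ 1 :=
        Real.rpow_le_one_of_one_le_of_nonpos (jb_one_le _) (by linarith)
      have hq : jb (2 * x) ≤ 1 + 2 * |x| := by
        unfold jb
        rw [Real.sqrt_le_left (by positivity)]
        nlinarith [sq_abs x, abs_nonneg x]
      refine le_trans (ENNReal.ofReal_le_ofReal (hp.trans (add_le_add h1 le_rfl))) ?_
      rw [ENNReal.ofReal_add (Real.rpow_pos_of_pos (jb_pos _) _).le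
        (mul_nonneg (jb_pos _).le hR0)]
      refine add_le_add le_rfl ?_
      rw [abs_mul, abs_of_pos (by norm_num : (0 : ℝ) < 4)]
      by_cases hx : x ∈ Set.Icc (-1 : ℝ) 1
      · rw [Set.indicator_of_mem hx]
        refine le_trans ?_ le_self_add
        have : |x| ≤ 1 := abs_le.2 hx
        have h3 : (3 : ℝ≥0∞) = ENNReal.ofReal 3 := by norm_num
        rw [h3]
        refine ENNReal.ofReal_le_ofReal ?_
        nlinarith [jb_pos (2 * x)]
      · rw [Set.indicator_of_notMem hx, zero_add]
        refine ENNReal.ofReal_le_ofReal ?_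
        have : 1 ≤ |x| := by
          by_contra hc
          exact hx (abs_le.1 (not_le.1 hc).le)
        gcongr
        linarith

lemma kernel_bound (s b₀ b : ℝ) (hs0 : 0 ≤ s) (hs : s ≤ 1 / 2)
    (hb₀ : 1 / 2 < b₀) (hb : 1 / 4 + s / 2 < b) :
    ∃ C : ℝ≥0∞, C < ∞ ∧ ∀ ξ τ : ℝ,
      ∫⁻ x : ℝ, ∫⁻ t : ℝ, ENNReal.ofReal (jb (x - (ξ - x)) ^ (2 * s) *
        jb (t + x ^ 2) ^ (-(2 * b₀)) * jb (τ - t + (ξ - x) ^ 2) ^ (-(2 * b))) ≤ C := by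
  obtain ⟨C, hC, hA⟩ := inner_bound s b hs0 hs hb
  refine ⟨(∫⁻ m : ℝ, ENNReal.ofReal (jb m ^ (-(2 * b₀)))) * C,
    ENNReal.mul_lt_top (jb_integrable (by linarith)) hC, fun ξ τ => ?_⟩
  calc _ = ∫⁻ x : ℝ, ∫⁻ m : ℝ, ENNReal.ofReal (jb (x - (ξ - x)) ^ (2 * s) *
        jb m ^ (-(2 * b₀)) * jb (τ - (m - x ^ 2) + (ξ - x) ^ 2) ^ (-(2 * b))) := by
        refine lintegral_congr fun x => ?_
        rw [← lintegral_add_right_eq_self (fun m => ENNReal.ofReal (jb (x - (ξ - x)) ^ (2 * s) *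
          jb m ^ (-(2 * b₀)) * jb (τ - (m - x ^ 2) + (ξ - x) ^ 2) ^ (-(2 * b)))) (x ^ 2)]
        simp only [add_sub_cancel_right]
    _ = ∫⁻ m : ℝ, ∫⁻ x : ℝ, ENNReal.ofReal (jb (x - (ξ - x)) ^ (2 * s) *
        jb m ^ (-(2 * b₀)) * jb (τ - (m - x ^ 2) + (ξ - x) ^ 2) ^ (-(2 * b))) := by
        refine lintegral_lintegral_swap (Measurable.aemeasurable ?_)
        unfold Function.uncurry
        fun_prop
    _ = ∫⁻ m : ℝ, ENNReal.ofReal (jb m ^ (-(2 * b₀))) * ∫⁻ x : ℝ,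
        ENNReal.ofReal (jb (2 * x) ^ (2 * s) *
          jb ((τ - m + ξ ^ 2 / 2) + 2 * x ^ 2) ^ (-(2 * b))) := by
        refine lintegral_congr fun m => ?_
        rw [← lintegral_const_mul _ (by fun_prop)]
        rw [← lintegral_sub_right_eq_self (fun x => ENNReal.ofReal (jb m ^ (-(2 * b₀))) *
          ENNReal.ofReal (jb (2 * x) ^ (2 * s) *
          jb ((τ - m + ξ ^ 2 / 2) + 2 * x ^ 2) ^ (-(2 * b)))) (ξ / 2)]
        refine lintegral_congr fun x => ?_
        rw [← ENNReal.ofReal_mul (Real.rpow_pos_of_pos (jb_pos _) _).le]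
        have e1 : 2 * (x - ξ / 2) = x - (ξ - x) := by ring
        have e2 : τ - m + ξ ^ 2 / 2 + 2 * (x - ξ / 2) ^ 2 = τ - (m - x ^ 2) + (ξ - x) ^ 2 := by
          ring
        rw [e1, e2]
        congr 1
        ring
    _ ≤ ∫⁻ m : ℝ, ENNReal.ofReal (jb m ^ (-(2 * b₀))) * C := by
        gcongr
        exact hA _
    _ = _ := lintegral_mul_const _ (by fun_prop)

lemma cs_sq {α : Type*} [MeasurableSpace α] (μ : Measure α) (f g : α → ℝ≥0∞)
    (hf : Measurable f) (hg : Measurable g) :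
    (∫⁻ a, f a * g a ∂μ) ^ 2 ≤ (∫⁻ a, f a ^ 2 ∂μ) * ∫⁻ a, g a ^ 2 ∂μ := by
  have h := ENNReal.lintegral_mul_le_Lp_mul_Lq μ Real.HolderConjugate.two_two
    hf.aemeasurable hg.aemeasurable
  have h2 := pow_le_pow_left' h 2
  refine h2.trans (le_of_eq ?_)
  rw [mul_pow, ← ENNReal.rpow_natCast, ← ENNReal.rpow_natCast, ← ENNReal.rpow_mul,
    ← ENNReal.rpow_mul]
  norm_num

lemma weight_sq (x r : ℝ) : ENNReal.ofReal (jb x ^ r) ^ 2 = ENNReal.ofReal (jb x ^ (2 * r)) := by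
  rw [← ENNReal.ofReal_pow (Real.rpow_pos_of_pos (jb_pos _) _).le, ← Real.rpow_natCast,
    ← Real.rpow_mul (jb_pos _).le]
  congr 2
  push_cast
  ring

lemma weight_cancel (x r : ℝ) :
    ENNReal.ofReal (jb x ^ (-r)) * ENNReal.ofReal (jb x ^ r) = 1 := by
  rw [← ENNReal.ofReal_mul (Real.rpow_pos_of_pos (jb_pos _) _).le, ← Real.rpow_add (jb_pos _)]
  simp

lemma conv_sq (s b₀ b : ℝ) (C : ℝ≥0∞) (hC : ∀ ξ τ : ℝ,
      ∫⁻ x : ℝ, ∫⁻ t : ℝ, ENNReal.ofReal (jb (x - (ξ - x)) ^ (2 * s) *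
        jb (t + x ^ 2) ^ (-(2 * b₀)) * jb (τ - t + (ξ - x) ^ 2) ^ (-(2 * b))) ≤ C)
    (F G : ℝ × ℝ → ℝ≥0∞) (hF : Measurable F) (hG : Measurable G) (p : ℝ × ℝ) :
    JminusConv s F G p ^ 2 ≤ C * ∫⁻ z : ℝ × ℝ,
      (ENNReal.ofReal (jb (z.2 + z.1 ^ 2) ^ (2 * b₀)) * F z ^ 2) *
      (ENNReal.ofReal (jb ((p - z).2 + (p - z).1 ^ 2) ^ (2 * b)) * G (p - z) ^ 2) := by
  have e : JminusConv s F G p = ∫⁻ z : ℝ × ℝ,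
      (ENNReal.ofReal (jb (z.1 - (p.1 - z.1)) ^ s) *
        ENNReal.ofReal (jb (z.2 + z.1 ^ 2) ^ (-b₀)) *
        ENNReal.ofReal (jb (p.2 - z.2 + (p.1 - z.1) ^ 2) ^ (-b))) *
      ((ENNReal.ofReal (jb (z.2 + z.1 ^ 2) ^ b₀) * F z) *
      (ENNReal.ofReal (jb ((p - z).2 + (p - z).1 ^ 2) ^ b) * G (p - z))) := by
    rw [Measure.volume_eq_prod, lintegral_prod _ (Measurable.aemeasurable (by fun_prop))]
    unfold JminusConv
    refine lintegral_congr fun x => lintegral_congr fun t => ?_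
    have h1 := weight_cancel (t + x ^ 2) b₀
    have h2 := weight_cancel (p.2 - t + (p.1 - x) ^ 2) b
    have e3 : p - (x, t) = (p.1 - x, p.2 - t) := rfl
    rw [e3]
    dsimp only
    generalize ENNReal.ofReal (jb (t + x ^ 2) ^ (-b₀)) = a1 at *
    generalize ENNReal.ofReal (jb (t + x ^ 2) ^ (b₀)) = a2 at *
    generalize ENNReal.ofReal (jb (p.2 - t + (p.1 - x) ^ 2) ^ (-b)) = a3 at *
    generalize ENNReal.ofReal (jb (p.2 - t + (p.1 - x) ^ 2) ^ (b)) = a4 at *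
    generalize ENNReal.ofReal (jb (x - (p.1 - x)) ^ s) = w
    calc w * F (x, t) * G (p.1 - x, p.2 - t)
        = w * F (x, t) * G (p.1 - x, p.2 - t) * (a1 * a2) * (a3 * a4) := by rw [h1, h2]; simp
      _ = _ := by ring
  rw [e]
  refine (cs_sq volume _ _ (by fun_prop) (by fun_prop)).trans ?_
  refine mul_le_mul' ?_ (le_of_eq ?_)
  · refine le_trans (le_of_eq ?_) (hC p.1 p.2)
    rw [Measure.volume_eq_prod, lintegral_prod _ (Measurable.aemeasurable (by fun_prop))]
    refine lintegral_congr fun x => lintegral_congr fun t => ?_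
    rw [mul_pow, mul_pow, weight_sq, weight_sq, weight_sq,
      ENNReal.ofReal_mul (mul_nonneg (Real.rpow_pos_of_pos (jb_pos _) _).le
        (Real.rpow_pos_of_pos (jb_pos _) _).le),
      ENNReal.ofReal_mul (Real.rpow_pos_of_pos (jb_pos _) _).le, mul_neg, mul_neg]
  · refine lintegral_congr fun z => ?_
    rw [mul_pow, mul_pow, mul_pow, weight_sq, weight_sq]

lemma conv_int (f g : ℝ × ℝ → ℝ≥0∞) (hf : Measurable f) (hg : Measurable g) :
    ∫⁻ p : ℝ × ℝ, ∫⁻ z : ℝ × ℝ, f z * g (p - z) = (∫⁻ z, f z) * ∫⁻ z, g z := by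
  rw [lintegral_lintegral_swap (Measurable.aemeasurable (by unfold Function.uncurry; fun_prop))]
  calc _ = ∫⁻ z : ℝ × ℝ, f z * ∫⁻ p, g p := by
        refine lintegral_congr fun z => ?_
        rw [lintegral_const_mul _ (by fun_prop), lintegral_sub_right_eq_self]
    _ = _ := lintegral_mul_const _ hf

/-- For `b₀ > 1/2`, `0 ≤ s ≤ 1/2` and `b > 1/4 + s/2`:
`‖J₋^s(u,v)‖_{L²_{x,t}} ≤ c ‖u‖_{X^+_{0,b₀}} ‖v‖_{X^+_{0,b}}` (on the Fourier side, via
Plancherel, for nonnegative Fourier data). -/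
theorem Jminus_bilinear_estimate (s b₀ b : ℝ) (hs0 : 0 ≤ s) (hs : s ≤ 1 / 2)
    (hb₀ : 1 / 2 < b₀) (hb : 1 / 4 + s / 2 < b) :
    ∃ c > (0 : ℝ), ∀ F G : ℝ × ℝ → ℝ≥0∞, Measurable F → Measurable G →
      (∫⁻ p : ℝ × ℝ, JminusConv s F G p ^ 2) ^ ((1 : ℝ) / 2) ≤
        ENNReal.ofReal c * X0norm b₀ F * X0norm b G := by
  obtain ⟨C, hC, hK⟩ := kernel_bound s b₀ b hs0 hs hb₀ hb
  refine ⟨(C.toReal + 1) ^ ((1 : ℝ) / 2), by positivity, fun F G hF hG => ?_⟩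
  unfold X0norm
  rw [← ENNReal.ofReal_rpow_of_nonneg (by positivity) (by norm_num),
    ← ENNReal.mul_rpow_of_nonneg _ _ (by norm_num), ← ENNReal.mul_rpow_of_nonneg _ _ (by norm_num)]
  refine ENNReal.rpow_le_rpow ?_ (by norm_num)
  have hCC : C ≤ ENNReal.ofReal (C.toReal + 1) := by
    refine (ENNReal.le_ofReal_iff_toReal_le hC.ne (by positivity)).2 (by linarith)
  refine (lintegral_mono (conv_sq s b₀ b C hK F G hF hG)).trans ?_
  rw [lintegral_const_mul' _ _ hC.ne]
  rw [conv_int (fun z => ENNReal.ofReal (jb (z.2 + z.1 ^ 2) ^ (2 * b₀)) * F z ^ 2)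
    (fun z => ENNReal.ofReal (jb (z.2 + z.1 ^ 2) ^ (2 * b)) * G z ^ 2)
    (by fun_prop) (by fun_prop), ← mul_assoc]
  gcongr
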